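/- The Eisenstein series E₆ satisfies the third-order nonlinear ODE given in invariant form by 343(J₆³ − 216I₆³) + 2(256I₆³ + 7J₆²)² = 0, which in cleared polynomial form states: for every τ ∈ ℍ, 343(B³E₆⁴ − 216A³E₆⁸) + 2(256A³ + 7B²)² = 0, where A = 6E₆E₆'' − 7(E₆')² and B = 36E₆²E₆''' − 144E₆E₆'E₆'' + 112(E₆')³. -/

import Mathlib

open Complex

noncomputable section

/-- The normalized derivative `F' = (2πi)⁻¹ dF/dτ`. -/
def nderiv (F : ℂ → ℂ) : ℂ → ℂ := fun τ => (2 * Real.pi * Complex.I)⁻¹ * deriv F τ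

/-- `q = e^{2πiτ}`. -/
def qq (τ : ℂ) : ℂ := Complex.exp (2 * Real.pi * Complex.I * τ)

/-- Sum of the `k`-th powers of the positive divisors of `n`. -/
def sigma' (k n : ℕ) : ℕ := ∑ d ∈ n.divisors, d ^ k

/-- The Eisenstein series `E₆`. -/
def E6 : ℂ → ℂ := fun τ => 1 - 504 * ∑' n : ℕ, (sigma' 5 (n + 1) : ℂ) * qq τ ^ (n + 1)

/-!
Write `D` for the normalized derivative, `∂ₖ = D - (k / 12) E₂` for the Serre derivative and
`[f, g] = k f Dg - l g Df` for the first Rankin–Cohen bracket of `f`, `g` of weights `k`, `l`.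
With `f = E₆`, the quantity `A = 6 f f'' - 7 f'²` is, up to a factor, the second Rankin–Cohen
bracket of `f` with itself, and `B = [f, A]`. The terms in `E₂` cancel when `D` is traded for `∂`
in either bracket, leaving in the second one an `E₄` that comes from `∂₁ E₂ = -E₄ / 12`.
This identity of Ramanujan, like `∂₄ E₄ = -E₆ / 3` and `∂₆ E₆ = -E₄² / 2`, holds because there is no
nonzero cusp form of level one and weight below 12; the last two give `∂₁₂ (E₆² - E₄³) = 0`.
Hence, with `x = E₆²` and `y = E₄³`,
`A = 7/4 E₄ (x - y)` and `B = -7/2 (x - y) (x - 4y)`, and the equation reduces to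
`16 y (x - y) + (x - 4y)² = x (x + 8y)` and `(x - 4y)³ + 27 x² y = (x - y) (x + 8y)²`.
-/

section

open UpperHalfPlane hiding I
open EisensteinSeries (E2 D2)
open ModularForm (E₄ E₆)
open Derivative Filter Topology
open scoped Manifold MatrixGroups ModularForm

section AtImInfty

variable {f : ℍ → ℂ} {c : ℂ}

lemma tendsto_atImInfty_of_hasSum_qExpansion {h : ℝ} (hh : 0 < h) {a : ℕ → ℂ}
    (hf : ∀ τ : ℍ, HasSum (fun m ↦ a m • Function.Periodic.qParam h τ ^ m) (f τ)) :
    Tendsto f atImInfty (𝓝 (a 0)) := by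
  let q (τ : ℍ) : ℂ := Function.Periodic.qParam h τ
  have hq₀ (τ : ℍ) : q τ ≠ 0 := Complex.exp_ne_zero _
  have hasSum_quotient (τ : ℍ) : HasSum (fun m ↦ a (m + 1) • q τ ^ m) ((q τ)⁻¹ * (f τ - a 0)) := by
    have htail := ((hasSum_nat_add_iff' 1).mpr (hf τ)).mul_left (q τ)⁻¹
    simp only [Finset.sum_range_one, pow_zero, smul_eq_mul, mul_one] at htail
    refine htail.congr_fun fun m ↦ ?_
    rw [smul_eq_mul, pow_succ', mul_left_comm (a (m + 1)), inv_mul_cancel_left₀ (hq₀ τ)]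
  have quotient_bounded : IsBoundedAtImInfty fun τ ↦ (q τ)⁻¹ * (f τ - a 0) :=
    isBoundedAtImInfty_of_hasSum_qExpansion hh hasSum_quotient
  have sub_tendsto : Tendsto (fun τ ↦ f τ - a 0) atImInfty (𝓝 0) :=
    ((qParam_tendsto_atImInfty hh).zero_mul_isBoundedUnder_le
      ((Asymptotics.isBigO_one_iff ℝ).mp quotient_bounded)).congr
      fun τ ↦ mul_inv_cancel_left₀ (hq₀ τ) _
  simpa using sub_tendsto.add_const (a 0)

lemma tendsto_E2_atImInfty : Tendsto E2 atImInfty (𝓝 1) :=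
  tendsto_atImInfty_of_hasSum_qExpansion one_pos
    (a := fun m ↦ if m = 0 then 1 else -24 * ArithmeticFunction.sigma 1 m) fun τ ↦ by
      simpa only [Function.Periodic.qParam, ofReal_one, div_one] using
        EisensteinSeries.hasSum_qExpansion_E2 (z := τ)

lemma tendsto_E_atImInfty {k : ℕ} (hk : 3 ≤ k) (hk_even : Even k) :
    Tendsto (ModularForm.E hk) atImInfty (𝓝 1) := by
  rw [← EisensteinSeries.E_qExpansion_coeff_zero hk hk_even]
  exact tendsto_atImInfty_of_hasSum_qExpansion one_pos fun τ ↦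
    ModularForm.hasSum_qExpansion _ one_pos one_mem_strictPeriods_SL τ

lemma tendsto_E₄_atImInfty : Tendsto E₄ atImInfty (𝓝 1) := tendsto_E_atImInfty _ ⟨2, rfl⟩

lemma tendsto_E₆_atImInfty : Tendsto E₆ atImInfty (𝓝 1) := tendsto_E_atImInfty _ ⟨3, rfl⟩

lemma isZeroAtImInfty_normalizedDerivOfComplex (hf : MDiff f) (hb : IsBoundedAtImInfty f) :
    IsZeroAtImInfty (D f) := by
  obtain ⟨M, A, hM⟩ := isBoundedAtImInfty_iff.mp hb
  set K : ℝ := ‖(2 * (Real.pi : ℂ) * I)⁻¹‖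
  refine isZeroAtImInfty_iff.mpr fun ε hε ↦ ⟨max (2 * A) (2 * K * M / ε), fun z hz ↦ ?_⟩
  have half_im_pos : 0 < z.im / 2 := half_pos z.im_pos
  have half_im_le {w : ℂ} (hw : dist w z ≤ z.im / 2) : z.im / 2 ≤ w.im := by
    rw [dist_eq_norm] at hw
    have := (abs_le.mp ((Complex.abs_im_le_norm (w - z)).trans hw)).1
    rw [Complex.sub_im, coe_im] at this
    linarith
  have cauchy : ‖deriv (f ∘ ofComplex) z‖ ≤ M / (z.im / 2) := by
    refine Complex.norm_deriv_le_of_forall_mem_sphere_norm_le half_im_pos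
      (((UpperHalfPlane.mdifferentiable_iff.mp hf).mono ?_).diffContOnCl) fun w hw ↦ ?_
    · intro w hw
      exact half_im_pos.trans_le (half_im_le (Metric.closure_ball_subset_closedBall hw))
    · have hw' := half_im_le hw.le
      rw [Function.comp_apply, ofComplex_apply_of_im_pos (half_im_pos.trans_le hw')]
      refine hM _ (le_trans ?_ hw')
      linarith [le_of_max_le_left hz]
  calc ‖D f z‖ = K * ‖deriv (f ∘ ofComplex) z‖ := norm_mul _ _
    _ ≤ K * (M / (z.im / 2)) := by gcongr
    _ = 2 * K * M / z.im := by ring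
    _ ≤ ε := (div_le_comm₀ hε z.im_pos).mp (le_of_max_le_right hz)

lemma tendsto_serreDerivative_atImInfty (k : ℂ) (hf : MDiff f)
    (hfc : Tendsto f atImInfty (𝓝 c)) :
    Tendsto (serreDerivative k f) atImInfty (𝓝 (-(k / 12 * c))) := by
  have hD := isZeroAtImInfty_normalizedDerivOfComplex hf (hfc.isBigO_one ℝ)
  convert! hD.sub ((tendsto_E2_atImInfty.const_mul (k * 12⁻¹)).mul hfc) using 2
  ring

lemma eq_of_tendsto_atImInfty {k : ℤ} (hk : k < 12) (hf : MDiff f)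
    (hfγ : ∀ γ : SL(2, ℤ), f ∣[k] γ = f) {g : ModularForm 𝒮ℒ k}
    (hfc : Tendsto f atImInfty (𝓝 c)) (hgc : Tendsto g atImInfty (𝓝 c)) : f = g := by
  have hgγ (γ : SL(2, ℤ)) : (g : ℍ → ℂ) ∣[k] γ = g :=
    SlashInvariantForm.slash_action_eqn g _ ⟨γ, rfl⟩
  have hγ (γ : SL(2, ℤ)) : (f - g) ∣[k] γ = f - g := by
    rw [sub_eq_add_neg, SlashAction.add_slash, SlashAction.neg_slash, hfγ, hgγ]
  have hzero : IsZeroAtImInfty (f - ⇑g) := by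
    have := hfc.sub hgc
    rwa [sub_self] at this
  let F : CuspForm 𝒮ℒ k :=
    { toFun := f - ⇑g
      slash_action_eq' := by
        rintro _ ⟨γ, rfl⟩
        exact hγ γ
      holo' := hf.sub (ModularFormClass.holo g)
      zero_at_cusps' := fun hs ↦ (OnePoint.isZeroAt_iff_forall_SL2Z hs).mpr fun γ _ ↦ by
        rwa [hγ γ] }
  have hF : F = 0 :=
    rank_zero_iff_forall_zero.mp (CuspForm.rank_eq_zero_of_weight_lt_twelve hk) F
  exact sub_eq_zero.mp (congrArg DFunLike.coe hF)

end AtImInfty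

section Ramanujan

lemma hasDerivAt_D2_comp_ofComplex (γ : SL(2, ℤ)) (z : ℍ) :
    HasDerivAt (D2 γ ∘ ofComplex) (-D2 γ z ^ 2 / (2 * Real.pi * I)) z := by
  have hdenom : HasDerivAt (fun w ↦ denom γ w ^ (-1 : ℤ))
      (-(γ 1 0 : ℂ) * denom γ z ^ (-2 : ℤ)) z := by
    simpa using hasDerivAt_denom_zpow (γ : GL (Fin 2) ℝ) (-1) z
  have hcongr : D2 γ ∘ ofComplex =ᶠ[𝓝 (z : ℂ)]
      fun w ↦ 2 * Real.pi * I * γ 1 0 * denom γ w ^ (-1 : ℤ) := by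
    filter_upwards [isOpen_upperHalfPlaneSet.mem_nhds z.im_pos] with w hw
    rw [Function.comp_apply, ofComplex_apply_of_im_pos hw, zpow_neg_one, ← div_eq_mul_inv]
    rfl
  convert! (hdenom.const_mul (2 * Real.pi * I * γ 1 0)).congr_of_eventuallyEq hcongr using 1
  have := denom_ne_zero γ z
  rw [D2, zpow_neg]
  have := Complex.two_pi_I_ne_zero
  field_simp

lemma mdifferentiable_D2 (γ : SL(2, ℤ)) : MDiff (D2 γ) := fun z ↦
  UpperHalfPlane.mdifferentiableAt_iff.mpr (hasDerivAt_D2_comp_ofComplex γ z).differentiableAt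

lemma normalizedDerivOfComplex_D2 (γ : SL(2, ℤ)) :
    D (D2 γ) = (4 * Real.pi ^ 2 : ℂ)⁻¹ • D2 γ ^ 2 := by
  ext z
  rw [normalizedDerivOfComplex, (hasDerivAt_D2_comp_ofComplex γ z).deriv]
  simp only [Pi.smul_apply, Pi.pow_apply, smul_eq_mul]
  field_simp
  rw [I_sq]
  ring

lemma serreDerivative_one_E2_eq_add :
    serreDerivative 1 E2 = serreDerivative (2 : ℤ) E2 + (12⁻¹ : ℂ) • (E2 * E2) := by
  ext z
  simp only [serreDerivative_apply, Pi.add_apply, Pi.smul_apply, Pi.mul_apply, smul_eq_mul]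
  push_cast
  ring

lemma serreDerivative_one_E2_slash (γ : SL(2, ℤ)) :
    serreDerivative 1 E2 ∣[(4 : ℤ)] γ = serreDerivative 1 E2 := by
  set u : ℍ → ℂ := (3 / Real.pi ^ 2 : ℂ) • D2 γ with hu
  have hE2 : E2 ∣[(2 : ℤ)] γ = E2 - u := by
    rw [EisensteinSeries.E2_slash_action, riemannZeta_two, hu]
    congr 2
    field_simp
    norm_num
  have hu_mdiff : MDiff u := (mdifferentiable_D2 γ).const_smul _
  have hDu : D u = (12⁻¹ : ℂ) • (u * u) := by
    rw [hu, normalizedDerivOfComplex_smul _ _ (mdifferentiable_D2 γ), normalizedDerivOfComplex_D2]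
    ext z
    simp only [Pi.smul_apply, Pi.mul_apply, Pi.pow_apply, smul_eq_mul]
    ring
  have hsq : (E2 * E2) ∣[(4 : ℤ)] γ = (E2 - u) * (E2 - u) := by
    rw [← hE2]
    exact ModularForm.mul_slash_SL2 2 2 γ E2 E2
  have hserre : serreDerivative (2 : ℤ) E2 ∣[(4 : ℤ)] γ = serreDerivative (2 : ℤ) (E2 - u) := by
    rw [← hE2]
    exact serreDerivative_slash_equivariant (k := 2) E2_mdifferentiable
  rw [serreDerivative_one_E2_eq_add, SlashAction.add_slash, ModularForm.SL_smul_slash, hserre, hsq,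
    serreDerivative_sub _ _ _ E2_mdifferentiable hu_mdiff]
  ext z
  simp only [serreDerivative_apply, Pi.add_apply, Pi.sub_apply, Pi.smul_apply, Pi.mul_apply,
    smul_eq_mul, hDu]
  push_cast
  ring

lemma serreDerivative_one_E2 : serreDerivative 1 E2 = -(12⁻¹ : ℂ) • E₄ := by
  refine eq_of_tendsto_atImInfty (g := -(12⁻¹ : ℂ) • E₄) (by norm_num)
    (serreDerivative_mdifferentiable 1 E2_mdifferentiable) serreDerivative_one_E2_slash
    (tendsto_serreDerivative_atImInfty 1 E2_mdifferentiable tendsto_E2_atImInfty) ?_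
  convert! tendsto_E₄_atImInfty.const_smul (-(12⁻¹ : ℂ)) using 2
  norm_num

lemma serreDerivative_eq_of_tendsto_atImInfty {k : ℤ} (hk : k < 10) {f : ModularForm 𝒮ℒ k}
    {g : ModularForm 𝒮ℒ (k + 2)} {c : ℂ} (hf : Tendsto f atImInfty (𝓝 c))
    (hg : Tendsto g atImInfty (𝓝 (-(k / 12 * c)))) : serreDerivative k f = g :=
  have hf_mdiff := ModularFormClass.holo f
  eq_of_tendsto_atImInfty (by lia) (serreDerivative_mdifferentiable k hf_mdiff)
    (fun γ ↦ serreDerivative_slash_invariant hf_mdiff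
      (SlashInvariantForm.slash_action_eqn f _ ⟨γ, rfl⟩))
    (tendsto_serreDerivative_atImInfty k hf_mdiff hf) hg

lemma serreDerivative_E₄ : serreDerivative 4 E₄ = -(3⁻¹ : ℂ) • E₆ := by
  refine mod_cast serreDerivative_eq_of_tendsto_atImInfty (k := 4) (g := -(3⁻¹ : ℂ) • E₆)
    (by norm_num) tendsto_E₄_atImInfty ?_
  convert! tendsto_E₆_atImInfty.const_smul (-(3⁻¹ : ℂ)) using 2
  norm_num

lemma serreDerivative_E₆ : serreDerivative 6 E₆ = -(2⁻¹ : ℂ) • (E₄ * E₄ : ℍ → ℂ) := by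
  refine mod_cast serreDerivative_eq_of_tendsto_atImInfty (k := 6) (g := -(2⁻¹ : ℂ) • E₄.mul E₄)
    (by norm_num) tendsto_E₆_atImInfty ?_
  convert! (tendsto_E₄_atImInfty.mul tendsto_E₄_atImInfty).const_smul (-(2⁻¹ : ℂ)) using 2
  norm_num

end Ramanujan

section RankinCohen

/-- The first Rankin–Cohen bracket of functions of weights `k` and `l`; if both are modular, it is
modular of weight `k + l + 2`. -/
def rankinCohenBracket (k l : ℂ) (f g : ℍ → ℂ) : ℍ → ℂ := k • (f * D g) - l • (D f * g)

/-- The second Rankin–Cohen bracket of a function of weight `k` with itself, divided by `k + 1`;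
if `f` is modular, it is modular of weight `2 * k + 4`. -/
def rankinCohenSelfBracket (k : ℂ) (f : ℍ → ℂ) : ℍ → ℂ :=
  k • (f * D (D f)) - (k + 1) • D f ^ 2

variable (k : ℂ) {f : ℍ → ℂ}

lemma rankinCohenBracket_eq_serreDerivative (l : ℂ) (f g : ℍ → ℂ) :
    rankinCohenBracket k l f g = k • (f * serreDerivative l g) - l • (serreDerivative k f * g) := by
  ext z
  simp only [rankinCohenBracket, serreDerivative_apply, Pi.sub_apply, Pi.smul_apply, Pi.mul_apply,
    smul_eq_mul]
  ring

lemma normalizedDerivOfComplex_serreDerivative (hf : MDiff f) :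
    D (serreDerivative k f) = D (D f) - (k / 12) • (D E2 * f + E2 * D f) := by
  have hE2f : MDiff (E2 * f) := E2_mdifferentiable.mul hf
  have hserre : serreDerivative k f = D f - (k / 12) • (E2 * f) := by
    ext z
    simp only [serreDerivative_apply, Pi.sub_apply, Pi.smul_apply, Pi.mul_apply, smul_eq_mul]
    ring
  rw [hserre, normalizedDerivOfComplex_sub _ _ (normalizedDerivOfComplex_mdifferentiable hf)
    (hE2f.const_smul _), normalizedDerivOfComplex_smul _ _ hE2f,
    normalizedDerivOfComplex_mul _ _ E2_mdifferentiable hf]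

lemma rankinCohenSelfBracket_eq_serreDerivative (hf : MDiff f) :
    rankinCohenSelfBracket k f =
      k • (f * serreDerivative (k + 2) (serreDerivative k f)) - (k + 1) • serreDerivative k f ^ 2 -
        (k ^ 2 / 144) • (E₄ * f ^ 2) := by
  ext z
  have hE2 := congrFun serreDerivative_one_E2 z
  simp only [rankinCohenSelfBracket, serreDerivative_apply,
    normalizedDerivOfComplex_serreDerivative k hf, Pi.sub_apply, Pi.add_apply, Pi.smul_apply,
    Pi.mul_apply, Pi.pow_apply, smul_eq_mul] at hE2 ⊢
  linear_combination k ^ 2 / 12 * f z ^ 2 * hE2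

lemma rankinCohenBracket_rankinCohenSelfBracket (hf : MDiff f) :
    rankinCohenBracket k (2 * k + 4) f (rankinCohenSelfBracket k f) =
      k ^ 2 • (f ^ 2 * D (D (D f))) - (3 * k * (k + 2)) • (f * D f * D (D f)) +
        (2 * (k + 1) * (k + 2)) • D f ^ 3 := by
  have hDf := normalizedDerivOfComplex_mdifferentiable hf
  have hD2f := normalizedDerivOfComplex_mdifferentiable hDf
  have hderiv : D (rankinCohenSelfBracket k f) =
      k • (D f * D (D f) + f * D (D (D f))) - (k + 1) • (2 * D f * D (D f)) := by
    rw [rankinCohenSelfBracket, normalizedDerivOfComplex_sub _ _ ((hf.mul hD2f).const_smul _)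
      ((hDf.pow 2).const_smul _), normalizedDerivOfComplex_smul _ _ (hf.mul hD2f),
      normalizedDerivOfComplex_smul _ _ (hDf.pow 2), normalizedDerivOfComplex_mul _ _ hf hD2f,
      normalizedDerivOfComplex_pow _ _ hDf, pow_one, Nat.cast_ofNat]
  ext z
  rw [rankinCohenBracket, hderiv]
  simp only [rankinCohenSelfBracket, Pi.add_apply, Pi.sub_apply, Pi.smul_apply, Pi.mul_apply,
    Pi.pow_apply, Pi.ofNat_apply, smul_eq_mul]
  ring

end RankinCohen

section E₆

lemma serreDerivative_serreDerivative_E₆ :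
    serreDerivative 8 (serreDerivative 6 E₆) = (3⁻¹ : ℂ) • (E₄ * E₆ : ℍ → ℂ) := by
  have hE₄ := ModularFormClass.holo E₄
  rw [serreDerivative_E₆, serreDerivative_smul _ _ _ (hE₄.mul hE₄),
    show (8 : ℂ) = 4 + 4 by norm_num, serreDerivative_mul _ _ _ _ hE₄ hE₄, serreDerivative_E₄]
  ext z
  simp only [Pi.add_apply, Pi.smul_apply, Pi.mul_apply, smul_eq_mul]
  ring

lemma rankinCohenSelfBracket_E₆ :
    rankinCohenSelfBracket 6 E₆ = (7 / 4 : ℂ) • (E₄ * (E₆ ^ 2 - E₄ ^ 3) : ℍ → ℂ) := by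
  rw [rankinCohenSelfBracket_eq_serreDerivative 6 (ModularFormClass.holo E₆),
    show (6 + 2 : ℂ) = 8 by norm_num, serreDerivative_serreDerivative_E₆, serreDerivative_E₆]
  ext z
  simp only [Pi.sub_apply, Pi.smul_apply, Pi.mul_apply, Pi.pow_apply, smul_eq_mul]
  ring

lemma serreDerivative_E₆_sq_sub_E₄_cube :
    serreDerivative 12 (E₆ ^ 2 - E₄ ^ 3 : ℍ → ℂ) = 0 := by
  have hE₄ := ModularFormClass.holo E₄
  have hE₆ := ModularFormClass.holo E₆
  ext z
  have hDE₄ := congrFun serreDerivative_E₄ z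
  have hDE₆ := congrFun serreDerivative_E₆ z
  simp only [serreDerivative_apply, normalizedDerivOfComplex_sub _ _ (hE₆.pow 2) (hE₄.pow 3),
    normalizedDerivOfComplex_pow _ _ hE₄, normalizedDerivOfComplex_pow _ _ hE₆, Pi.sub_apply,
    Pi.smul_apply, Pi.mul_apply, Pi.pow_apply, Pi.zero_apply, Pi.natCast_apply,
    smul_eq_mul] at hDE₄ hDE₆ ⊢
  push_cast
  linear_combination 2 * E₆ z * hDE₆ - 3 * E₄ z ^ 2 * hDE₄

lemma rankinCohenBracket_E₆ :
    rankinCohenBracket 6 16 E₆ (rankinCohenSelfBracket 6 E₆) =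
      -(7 / 2 : ℂ) • ((E₆ ^ 2 - E₄ ^ 3) * (E₆ ^ 2 - 4 * E₄ ^ 3) : ℍ → ℂ) := by
  have hE₄ := ModularFormClass.holo E₄
  have hdisc : MDiff (E₆ ^ 2 - E₄ ^ 3 : ℍ → ℂ) :=
    ((ModularFormClass.holo E₆).pow 2).sub (hE₄.pow 3)
  rw [rankinCohenBracket_eq_serreDerivative, rankinCohenSelfBracket_E₆,
    serreDerivative_smul _ _ _ (hE₄.mul hdisc), show (16 : ℂ) = 4 + 12 by norm_num,
    serreDerivative_mul _ _ _ _ hE₄ hdisc, serreDerivative_E₆_sq_sub_E₄_cube, serreDerivative_E₄,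
    serreDerivative_E₆]
  ext z
  simp only [Pi.add_apply, Pi.sub_apply, Pi.smul_apply, Pi.mul_apply, Pi.pow_apply,
    Pi.ofNat_apply, smul_eq_mul]
  ring

lemma rankinCohenBrackets_E₆_relation (z : ℍ) :
    let A := rankinCohenSelfBracket 6 E₆ z
    let B := rankinCohenBracket 6 16 E₆ (rankinCohenSelfBracket 6 E₆) z
    343 * (B ^ 3 * E₆ z ^ 4 - 216 * A ^ 3 * E₆ z ^ 8) + 2 * (256 * A ^ 3 + 7 * B ^ 2) ^ 2 = 0 := by
  rw [rankinCohenBracket_E₆, rankinCohenSelfBracket_E₆]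
  simp only [Pi.sub_apply, Pi.smul_apply, Pi.mul_apply, Pi.pow_apply, Pi.ofNat_apply, smul_eq_mul]
  ring

lemma nderiv_comp_coe (F : ℂ → ℂ) : nderiv F ∘ ((↑) : ℍ → ℂ) = D (F ∘ (↑)) := by
  ext z
  have hcongr : (F ∘ (↑)) ∘ ofComplex =ᶠ[𝓝 (z : ℂ)] F := by
    filter_upwards [isOpen_upperHalfPlaneSet.mem_nhds z.im_pos] with w hw
    simp only [Function.comp_apply, ofComplex_apply_of_im_pos hw]
  rw [normalizedDerivOfComplex, hcongr.deriv_eq]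
  rfl

lemma E6_comp_coe : E6 ∘ ((↑) : ℍ → ℂ) = E₆ := by
  ext z
  have hcoeff := (EisensteinSeries.E_qExpansion_coeff (k := 6) (by norm_num) ⟨3, rfl⟩ 1).symm.trans
    ModularForm.E₆_qExpansion_coeff_one
  simp only [one_ne_zero, if_false, ArithmeticFunction.sigma_one, Nat.cast_one, mul_one,
    neg_inj] at hcoeff
  have htsum := tsum_pnat_eq_tsum_succ (f := fun n : ℕ ↦
    (ArithmeticFunction.sigma 5 n : ℂ) * Complex.exp (2 * Real.pi * I * z) ^ n)
  rw [EisensteinSeries.q_expansion_bernoulli (k := 6) (by norm_num) ⟨3, rfl⟩ z, hcoeff]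
  exact congrArg (fun s : ℂ ↦ 1 - 504 * s) htsum.symm

lemma iterate_nderiv_E6 (n : ℕ) (z : ℍ) : nderiv^[n] E6 z = D^[n] E₆ z := by
  have hsemiconj : Function.Semiconj (· ∘ ((↑) : ℍ → ℂ)) nderiv D := nderiv_comp_coe
  rw [← E6_comp_coe, ← (hsemiconj.iterate_right n).eq E6, Function.comp_apply]

end E₆

end

/-- The Eisenstein series `E₆` satisfies the third-order nonlinear ODE
`343(J₆³ − 216I₆³) + 2(256I₆³ + 7J₆²)² = 0` in cleared polynomial form. -/
theorem E6_third_order_ODE :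
    ∀ τ : ℂ, 0 < τ.im →
      let A := 6 * E6 τ * nderiv (nderiv E6) τ - 7 * (nderiv E6 τ) ^ 2
      let B := 36 * E6 τ ^ 2 * nderiv (nderiv (nderiv E6)) τ -
        144 * E6 τ * nderiv E6 τ * nderiv (nderiv E6) τ + 112 * (nderiv E6 τ) ^ 3
      343 * (B ^ 3 * E6 τ ^ 4 - 216 * A ^ 3 * E6 τ ^ 8) +
        2 * (256 * A ^ 3 + 7 * B ^ 2) ^ 2 = 0 := by
  intro τ hτ A B
  obtain ⟨z, rfl⟩ : ∃ z : UpperHalfPlane, (z : ℂ) = τ := ⟨⟨τ, hτ⟩, rfl⟩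
  have h0 := iterate_nderiv_E6 0 z
  have h1 := iterate_nderiv_E6 1 z
  have h2 := iterate_nderiv_E6 2 z
  have h3 := iterate_nderiv_E6 3 z
  simp only [Function.iterate_succ_apply', Function.iterate_zero_apply] at h0 h1 h2 h3
  have hA : A = rankinCohenSelfBracket 6 ModularForm.E₆ z := by
    simp only [A, h0, h1, h2, rankinCohenSelfBracket, Pi.sub_apply, Pi.smul_apply, Pi.mul_apply,
      Pi.pow_apply, smul_eq_mul]
    ring
  have hB : B = rankinCohenBracket 6 16 ModularForm.E₆
      (rankinCohenSelfBracket 6 ModularForm.E₆) z := by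
    rw [show (16 : ℂ) = 2 * 6 + 4 by norm_num,
      rankinCohenBracket_rankinCohenSelfBracket 6 (ModularFormClass.holo _)]
    simp only [B, h0, h1, h2, h3, Pi.add_apply, Pi.sub_apply, Pi.smul_apply, Pi.mul_apply,
      Pi.pow_apply, smul_eq_mul]
    ring
  rw [hA, hB, h0]
  exact rankinCohenBrackets_E₆_relation z
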